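/- There is a graded k-algebra homomorphism ρ: U(W₊) → k(X)[t; τ*] determined by ρ(e₁) = t and ρ(e₂) = f t², where k(X)[t; τ*] is the skew polynomial ring over k(X) (the free left k(X)-module with basis {tⁿ}_{n≥0} and multiplication determined by t·g = τ*(g)·t for g ∈ k(X)), graded with t in degree 1. -/

import Mathlib

set_option maxHeartbeats 1000000
set_option synthInstance.maxHeartbeats 1000000

noncomputable section

open MvPolynomial

variable (k : Type*) [Field k]

/-- The polynomial ring k[w,x,y,z], with w,x,y,z the variables indexed by 0,1,2,3. -/
abbrev conePoly := MvPolynomial (Fin 4) k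

/-- The relation xz − y². -/
def coneRel : conePoly k := X 1 * X 3 - X 2 ^ 2

/-- The ideal (xz − y²). -/
def coneIdeal : Ideal (conePoly k) := Ideal.span {coneRel k}

/-- The coordinate ring A = k[w,x,y,z]/(xz − y²) of the affine cone. -/
abbrev coneRing := conePoly k ⧸ coneIdeal k

/-- The substitution w ↦ w − 2x + 2z, x ↦ z, y ↦ −y − 2z, z ↦ x + 4y + 4z. -/
def tauSub : Fin 4 → conePoly k :=
  ![X 0 - 2 * X 1 + 2 * X 3, X 3, - X 2 - 2 * X 3, X 1 + 4 * X 2 + 4 * X 3]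

/-- The inverse substitution. -/
def tauInvSub : Fin 4 → conePoly k :=
  ![X 0 + 6 * X 1 + 8 * X 2 + 2 * X 3, 4 * X 1 + 4 * X 2 + X 3, - (2 * X 1) - X 2, X 1]

/-- The substitution τ* as an algebra automorphism of k[w,x,y,z]. -/
def tauPoly : conePoly k ≃ₐ[k] conePoly k :=
  AlgEquiv.ofAlgHom (aeval (tauSub k)) (aeval (tauInvSub k))
    (by
      apply MvPolynomial.algHom_ext
      intro i
      fin_cases i <;> simp [tauSub, tauInvSub, map_ofNat] <;> ring)
    (by
      apply MvPolynomial.algHom_ext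
      intro i
      fin_cases i <;> simp [tauSub, tauInvSub, map_ofNat] <;> ring)

lemma tauPoly_coneRel : tauPoly k (coneRel k) = coneRel k := by
  show aeval (tauSub k) (coneRel k) = coneRel k
  simp only [coneRel, tauSub, Matrix.cons_val_zero, Matrix.cons_val_one, Matrix.head_cons,
    Matrix.cons_val_two, Matrix.tail_cons, Matrix.cons_val_three,
    map_add, map_sub, map_mul, map_neg, map_ofNat, map_pow, aeval_X]
  ring

lemma coneIdeal_eq_map :
    coneIdeal k = (coneIdeal k).map (tauPoly k : conePoly k →+* conePoly k) := by
  have h : (tauPoly k : conePoly k →+* conePoly k) (coneRel k) = coneRel k := tauPoly_coneRel k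
  rw [coneIdeal, Ideal.map_span, Set.image_singleton, h]

/-- The automorphism τ* of A = k[w,x,y,z]/(xz − y²) induced by the substitution. -/
def tauCone : coneRing k ≃ₐ[k] coneRing k :=
  Ideal.quotientEquivAlg (coneIdeal k) (coneIdeal k) (tauPoly k) (coneIdeal_eq_map k)

/-- k(X), the fraction field of A. -/
abbrev coneField := FractionRing (coneRing k)

/-- The automorphism τ* of k(X) induced by τ*. -/
def tauFrac :=
  IsFractionRing.algEquivOfAlgEquiv (R := k) (K := coneField k) (L := coneField k) (tauCone k)

/-- The images of the coordinates w, x, y, z in k(X). -/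
def varK (i : Fin 4) : coneField k :=
  algebraMap (coneRing k) (coneField k) (Ideal.Quotient.mk (coneIdeal k) (X i))

variable [IsDomain (coneRing k)]

/-- The rational function f = (w + 12x + 22y + 8z)/(12x + 6y) ∈ k(X). -/
def fRat : coneField k :=
  (varK k 0 + 12 * varK k 1 + 22 * varK k 2 + 8 * varK k 3) /
    (12 * varK k 1 + 6 * varK k 2)

/-- fᵢ = (τ*)^i (f). -/
def fIter (i : ℕ) : coneField k := ((tauFrac k) ^ i) (fRat k)

end

/-!
Statement 6: There is a graded k-algebra homomorphism ρ: U(W₊) → k(X)[t; τ*] determined by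
ρ(e₁) = t and ρ(e₂) = f·t².

Here the skew polynomial ring k(X)[t; τ*] — the free left k(X)-module with basis {tⁿ} and
multiplication determined by t·g = τ*(g)·t — is realized concretely as a subalgebra of the
k-linear endomorphisms of the free left k(X)-module ℕ →₀ k(X): the element g·tⁿ acts as
"multiply coefficients by g on the left, twist them by (τ*)ⁿ, and shift degrees up by n";
thus k(X)[t; τ*] is the subalgebra generated by the operator `tOp` (left multiplication
by t) together with the operators `mulOp g` (left multiplication by g ∈ k(X)), and its
degree-n homogeneous component consists of the operators `mulOp g * tOp ^ n`.
The grading of U(W₊) is given by deg eₙ = n: the degree-n component is the k-span of all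
products e_{i₁} ⋯ e_{i_r} with i₁ + ⋯ + i_r = n.
-/

noncomputable section

open Polynomial in
/-- The derivation `e n = x^(n+1) d/dx` of `k[x]`. -/
def wittGen (k : Type*) [Field k] (n : ℕ) : Derivation k k[X] k[X] :=
  (X : k[X]) ^ (n + 1) • Polynomial.derivative'

open Polynomial in
/-- The positive Witt algebra `W₊`. -/
def positiveWitt (k : Type*) [Field k] : LieSubalgebra k (Derivation k k[X] k[X]) :=
  LieSubalgebra.lieSpan k _ {d | ∃ n : ℕ, 1 ≤ n ∧ d = wittGen k n}

/-- The element `e (m+1)` of `W₊` (so `wittEltS k 0 = e₁`, `wittEltS k 1 = e₂`, …). -/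
def wittEltS (k : Type*) [Field k] (m : ℕ) : positiveWitt k :=
  ⟨wittGen k (m + 1), LieSubalgebra.subset_lieSpan ⟨m + 1, by omega, rfl⟩⟩

/-- The degree-n homogeneous component of U(W₊) (deg eₙ = n): the k-span of the products
`e_{i₁} ⋯ e_{i_r}` with `i₁ + ⋯ + i_r = n`. -/
def Udeg (k : Type*) [Field k] (n : ℕ) :
    Submodule k (UniversalEnvelopingAlgebra k (positiveWitt k)) :=
  Submodule.span k
    {u | ∃ l : List ℕ, (l.map (· + 1)).sum = n ∧
      u = (l.map fun m => UniversalEnvelopingAlgebra.ι k (wittEltS k m)).prod}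

variable (k : Type*) [Field k] [IsDomain (coneRing k)]

/-- Left multiplication by g ∈ k(X) on the free module ⊕ₙ k(X)·tⁿ = (ℕ →₀ k(X)). -/
def mulOp (g : coneField k) : Module.End k (ℕ →₀ coneField k) :=
  Finsupp.mapRange.linearMap (LinearMap.mulLeft k g)

/-- Left multiplication by t on ⊕ₙ k(X)·tⁿ:  t · (g tⁿ) = τ*(g) t^(n+1). -/
def tOp : Module.End k (ℕ →₀ coneField k) :=
  (Finsupp.lmapDomain (coneField k) k Nat.succ).comp
    (Finsupp.mapRange.linearMap (tauFrac k).toLinearMap)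

/-- The skew polynomial ring k(X)[t; τ*], realized as the subalgebra of
End_k(⊕ₙ k(X)·tⁿ) generated by t and the left multiplications by elements of k(X). -/
def skewPolyRing : Subalgebra k (Module.End k (ℕ →₀ coneField k)) :=
  Algebra.adjoin k ({tOp k} ∪ Set.range (mulOp k))

/-!
Suppose that `t g = τ(g) t` and that `q`, `l` are coefficients with `τ(q) = q - 1`, `τ(l) = l`.
With `s = q⁻¹ t`, the elements `(q + (n - 1) l) sⁿ` satisfy the relations of the `e n`: reading `s`
as multiplication by `x` and `q` as the Euler operator `x d/dx`, this is the action of `W₊` on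
tensor densities of weight determined by `l`. It sends `e₁` to `t` and `e₂` to
`(q + l) / (q (q - 1)) t²`.

On the cone, `x = a²`, `y = ab`, `z = b²`, and `τ*` is induced by `(a, b) ↦ (b, -a - 2b)`. This
negates `a + b`, so it fixes `(a + b)² = x + 2y + z` and translates `a / (a + b)`, hence also
`q = 1 + a / (a + b)`, by `-1`. It changes `w / (a + b)²` by `6 - 4q`, which `-2q² + 4q`
compensates; the resulting invariant, divided by `6`, is the `l` for which
`f = (q + l) / (q (q - 1))`.
-/

section WittAlgebra

variable {R L : Type*} [CommRing R] [LieRing L] [LieAlgebra R L]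

lemma toSubmodule_lieSpan_of_lie_mem_span {s : Set L}
    (hs : ∀ x ∈ s, ∀ y ∈ s, ⁅x, y⁆ ∈ Submodule.span R s) :
    (LieSubalgebra.lieSpan R L s).toSubmodule = Submodule.span R s := by
  have lie_mem {x y : L} (hx : x ∈ Submodule.span R s) (hy : y ∈ Submodule.span R s) :
      ⁅x, y⁆ ∈ Submodule.span R s :=
    LinearMap.BilinMap.apply_apply_mem_of_mem_span _ s s
      (LieModule.toEnd R L L : L →ₗ[R] Module.End R L) hs x y hx hy
  let K : LieSubalgebra R L := { Submodule.span R s with lie_mem' := lie_mem }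
  exact le_antisymm (LieSubalgebra.lieSpan_le (K := K).mpr Submodule.subset_span)
    LieSubalgebra.submodule_span_le_lieSpan

lemma map_lie_of_basis {ι L' : Type*} [LieRing L'] [LieAlgebra R L'] (b : Module.Basis ι R L)
    (f : L →ₗ[R] L') (h : ∀ i j, f ⁅b i, b j⁆ = ⁅f (b i), f (b j)⁆) (x y : L) :
    f ⁅x, y⁆ = ⁅f x, f y⁆ := by
  let B : L →ₗ[R] L →ₗ[R] L := LieModule.toEnd R L L
  let B' : L' →ₗ[R] L' →ₗ[R] L' := LieModule.toEnd R L' L'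
  have hB : B.compr₂ f = B'.compl₁₂ f f := LinearMap.ext_basis b b h
  exact LinearMap.congr_fun₂ hB x y

open Polynomial

variable {k : Type*} [Field k]

lemma wittGen_eq_mkDerivation (n : ℕ) : wittGen k n = mkDerivation k (X ^ (n + 1)) :=
  derivation_ext (by simp [wittGen, derivative'])

lemma lie_wittGen (n m : ℕ) :
    ⁅wittGen k n, wittGen k m⁆ = ((m : k) - n) • wittGen k (n + m) := by
  refine derivation_ext ?_
  simp [wittGen_eq_mkDerivation, Derivation.commutator_apply, smul_eq_C_mul]
  ring

lemma toSubmodule_positiveWitt :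
    (positiveWitt k).toSubmodule = Submodule.span k (Set.range fun m ↦ wittGen k (m + 1)) := by
  have hgen : {d | ∃ n : ℕ, 1 ≤ n ∧ d = wittGen k n} = Set.range fun m ↦ wittGen k (m + 1) := by
    ext d
    constructor
    · rintro ⟨n, hn, rfl⟩
      exact ⟨n - 1, by simp only [Nat.sub_add_cancel hn]⟩
    · rintro ⟨m, rfl⟩
      exact ⟨m + 1, m.succ_pos, rfl⟩
  rw [positiveWitt, hgen]
  refine toSubmodule_lieSpan_of_lie_mem_span ?_
  rintro _ ⟨n, rfl⟩ _ ⟨m, rfl⟩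
  rw [lie_wittGen]
  exact Submodule.smul_mem _ _ (Submodule.subset_span ⟨n + 1 + m, rfl⟩)

lemma linearIndependent_wittGen : LinearIndependent k (wittGen k) := by
  refine LinearIndependent.of_comp (mkDerivationEquiv k).symm.toLinearMap ?_
  have hX : (mkDerivationEquiv k).symm ∘ wittGen k = basisMonomials k ∘ Nat.succ := by
    funext n
    simp [wittGen_eq_mkDerivation, X_pow_eq_monomial]
  exact hX ▸ (basisMonomials k).linearIndependent.comp _ Nat.succ_injective

variable (k) in
/-- The basis `e₁, e₂, …` of `W₊`; its `m`-th vector is `e (m+1)`, as in `wittEltS`. -/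
def positiveWittBasis : Module.Basis ℕ k (positiveWitt k) :=
  (Module.Basis.span (linearIndependent_wittGen.comp _ Nat.succ_injective)).map
    (LinearEquiv.ofEq _ _ toSubmodule_positiveWitt.symm)

lemma positiveWittBasis_apply (m : ℕ) : positiveWittBasis k m = wittEltS k m :=
  have hspan := Module.Basis.span_apply
    (linearIndependent_wittGen (k := k).comp _ Nat.succ_injective) m
  Subtype.ext (congrArg Subtype.val hspan :)

lemma lie_positiveWittBasis (n m : ℕ) :
    ⁅positiveWittBasis k n, positiveWittBasis k m⁆ =
      ((m : k) - n) • positiveWittBasis k (n + m + 1) := by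
  simp only [positiveWittBasis_apply]
  refine Subtype.ext ((lie_wittGen (n + 1) (m + 1)).trans ?_)
  rw [show n + 1 + (m + 1) = n + m + 1 + 1 by ring]
  simp [wittEltS]

variable [LieAlgebra k L]

/-- The Lie algebra homomorphism `e (m+1) ↦ E m` from `W₊` defined by a family satisfying the
defining relations of `W₊`. -/
def positiveWittLift (E : ℕ → L) (hE : ∀ n m, ⁅E n, E m⁆ = ((m : k) - n) • E (n + m + 1)) :
    positiveWitt k →ₗ⁅k⁆ L where
  toLinearMap := (positiveWittBasis k).constr k E
  map_lie' {x y} := by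
    have hE' (n m : ℕ) : (positiveWittBasis k).constr k E ⁅positiveWittBasis k n,
        positiveWittBasis k m⁆ = ⁅E n, E m⁆ := by
      simp only [lie_positiveWittBasis, map_smul, Module.Basis.constr_basis, hE]
    exact map_lie_of_basis (positiveWittBasis k) _ (by simpa using hE') x y

lemma positiveWittLift_wittEltS {E : ℕ → L}
    (hE : ∀ n m, ⁅E n, E m⁆ = ((m : k) - n) • E (n + m + 1)) (m : ℕ) :
    positiveWittLift E hE (wittEltS k m) = E m := by
  rw [← positiveWittBasis_apply]
  exact (positiveWittBasis k).constr_basis k E m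

lemma positiveWittLift_mem {E : ℕ → L} (hE : ∀ n m, ⁅E n, E m⁆ = ((m : k) - n) • E (n + m + 1))
    {N : Submodule k L} (hN : ∀ n, E n ∈ N) (x : positiveWitt k) :
    positiveWittLift E hE x ∈ N := by
  have hrange : LinearMap.range ((positiveWittBasis k).constr k E) ≤ N := by
    rw [Module.Basis.constr_range, Submodule.span_le]
    rintro _ ⟨n, rfl⟩
    exact hN n
  exact hrange ⟨x, rfl⟩

lemma Udeg_le_comap {A : Type*} [Ring A] [Algebra k A] (𝒜 : ℕ → Submodule k A)
    [SetLike.GradedMonoid 𝒜] (φ : UniversalEnvelopingAlgebra k (positiveWitt k) →ₐ[k] A)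
    (hφ : ∀ m, φ (UniversalEnvelopingAlgebra.ι k (wittEltS k m)) ∈ 𝒜 (m + 1)) (n : ℕ) :
    Udeg k n ≤ (𝒜 n).comap φ.toLinearMap := by
  refine Submodule.span_le.mpr ?_
  rintro _ ⟨l, rfl, rfl⟩
  change φ _ ∈ 𝒜 _
  rw [map_list_prod, List.map_map]
  exact SetLike.list_prod_map_mem_graded l _ _ fun m _ ↦ hφ m

end WittAlgebra

section SkewPair

lemma semiconjBy_pow_iterate {F A : Type*} [Monoid A] {μ : F → A} {τ : F → F} {t : A}
    (ht : ∀ g, SemiconjBy t (μ g) (μ (τ g))) (n : ℕ) (g : F) :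
    SemiconjBy (t ^ n) (μ g) (μ (τ^[n] g)) := by
  induction n with
  | zero => simp
  | succ n ih =>
    rw [pow_succ', Function.iterate_succ_apply']
    exact (ht _).mul_left ih

lemma semiconjBy_map_mul {Φ F A : Type*} [CommMagma F] [Semigroup A] [FunLike Φ F A]
    [MulHomClass Φ F A] {μ : Φ} {τ : F → F} {t : A} (ht : ∀ g, SemiconjBy t (μ g) (μ (τ g)))
    (a g : F) : SemiconjBy (μ a * t) (μ g) (μ (τ g)) :=
  SemiconjBy.mul_left ((Commute.all a (τ g)).map μ) (ht g)

section Grading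

variable {k F A : Type*} [CommSemiring k] [Semiring F] [Algebra k F] [Semiring A] [Algebra k A]

/-- The component `F tⁿ` of degree `n` of the skew polynomials in `t` with coefficients in `F`,
acting in `A` through `μ`. -/
def skewComponent (μ : F →ₐ[k] A) (t : A) (n : ℕ) : Submodule k A :=
  LinearMap.range (LinearMap.mulRight k (t ^ n) ∘ₗ μ.toLinearMap)

lemma mul_pow_mem_skewComponent (μ : F →ₐ[k] A) (t : A) (g : F) (n : ℕ) :
    μ g * t ^ n ∈ skewComponent μ t n :=
  ⟨g, rfl⟩

lemma gradedMonoid_skewComponent {μ : F →ₐ[k] A} {τ : F → F} {t : A}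
    (ht : ∀ g, SemiconjBy t (μ g) (μ (τ g))) : SetLike.GradedMonoid (skewComponent μ t) where
  one_mem := by simpa using mul_pow_mem_skewComponent μ t 1 0
  mul_mem := by
    rintro n m _ _ ⟨g, rfl⟩ ⟨h, rfl⟩
    refine ⟨g * τ^[n] h, ?_⟩
    calc μ (g * τ^[n] h) * t ^ (n + m) = μ g * (μ (τ^[n] h) * t ^ n) * t ^ m := by
          rw [map_mul, pow_add]; simp only [mul_assoc]
      _ = μ g * t ^ n * (μ h * t ^ m) := by
          rw [← (semiconjBy_pow_iterate ht n h).eq]; simp only [mul_assoc]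

end Grading

section Commutator

variable {k F A : Type*} [CommRing k] [CommRing F] [Algebra k F] [Ring A] [Algebra k A]
  {τ : F →+* F} {q l : F}

lemma iterate_add_natCast_mul (hq : τ q = q - 1) (hl : τ l = l) (n m : ℕ) :
    τ^[n] (q + m * l) = q - n + m * l := by
  induction n with
  | zero => simp
  | succ n ih =>
    rw [Function.iterate_succ_apply', ih]
    simp only [map_add, map_sub, map_mul, map_natCast, hq, hl]
    push_cast
    ring

lemma commutator_mul_pow_eq_smul {μ : F →ₐ[k] A} {s : A}
    (hs : ∀ g, SemiconjBy s (μ g) (μ (τ g))) (hq : τ q = q - 1) (hl : τ l = l) (n m : ℕ) :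
    ⁅μ (q + n * l) * s ^ (n + 1), μ (q + m * l) * s ^ (m + 1)⁆ =
      ((m : k) - n) • (μ (q + (n + m + 1 : ℕ) * l) * s ^ (n + m + 1 + 1)) := by
  have hmul (i j : ℕ) : μ (q + i * l) * s ^ (i + 1) * (μ (q + j * l) * s ^ (j + 1)) =
      μ ((q + i * l) * (q - (i + 1 : ℕ) + j * l)) * s ^ (i + j + 1 + 1) := by
    calc _ = μ (q + i * l) * (s ^ (i + 1) * μ (q + j * l)) * s ^ (j + 1) := by
          simp only [mul_assoc]
      _ = μ (q + i * l) * (μ (q - (i + 1 : ℕ) + j * l) * s ^ (i + 1)) * s ^ (j + 1) := by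
          rw [(semiconjBy_pow_iterate hs (i + 1) _).eq, iterate_add_natCast_mul hq hl]
      _ = _ := by
          rw [map_mul, show i + j + 1 + 1 = i + 1 + (j + 1) by ring, pow_add s (i + 1)]
          simp only [mul_assoc]
  rw [Ring.lie_def, hmul, hmul, add_comm m n, ← sub_mul, ← map_sub, ← smul_mul_assoc, ← map_smul]
  congr 2
  rw [Algebra.smul_def]
  push_cast [map_sub, map_natCast]
  ring

end Commutator

end SkewPair

section DensityHom

attribute [local instance 100] LieRing.ofAssociativeRing

lemma lift_mem_subalgebra {R L A : Type*} [CommRing R] [LieRing L] [LieAlgebra R L] [Ring A]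
    [Algebra R A] {f : L →ₗ⁅R⁆ A} {S : Subalgebra R A} (hf : ∀ x, f x ∈ S)
    (u : UniversalEnvelopingAlgebra R L) :
    UniversalEnvelopingAlgebra.lift R f u ∈ S := by
  let g : L →ₗ⁅R⁆ S :=
    { (f : L →ₗ[R] A).codRestrict S.toSubmodule hf with
      map_lie' := Subtype.ext (f.map_lie _ _) }
  have hfg : S.val.comp (UniversalEnvelopingAlgebra.lift R g) =
      UniversalEnvelopingAlgebra.lift R f := by
    refine UniversalEnvelopingAlgebra.hom_ext R (LieHom.ext fun x ↦ ?_)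
    change (UniversalEnvelopingAlgebra.lift R g (UniversalEnvelopingAlgebra.ι R x) : A) =
      UniversalEnvelopingAlgebra.lift R f (UniversalEnvelopingAlgebra.ι R x)
    rw [UniversalEnvelopingAlgebra.lift_ι_apply, UniversalEnvelopingAlgebra.lift_ι_apply]
    rfl
  rw [← hfg]
  exact (UniversalEnvelopingAlgebra.lift R g u).2

variable {k F A : Type*} [Field k] [Field F] [Algebra k F] [Ring A] [Algebra k A]
  {μ : F →ₐ[k] A} {τ : F →+* F} {t : A} {q l : F}

/-- The homomorphism `e n ↦ (q + (n - 1) l) (q⁻¹ t)ⁿ` from `U(W₊)`. -/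
def densityHom (ht : ∀ g, SemiconjBy t (μ g) (μ (τ g))) (hq : τ q = q - 1) (hl : τ l = l) :
    UniversalEnvelopingAlgebra k (positiveWitt k) →ₐ[k] A :=
  UniversalEnvelopingAlgebra.lift k <|
    positiveWittLift (fun n ↦ μ (q + n * l) * (μ q⁻¹ * t) ^ (n + 1))
      (commutator_mul_pow_eq_smul (semiconjBy_map_mul ht q⁻¹) hq hl)

variable (ht : ∀ g, SemiconjBy t (μ g) (μ (τ g))) (hq : τ q = q - 1) (hl : τ l = l)

lemma densityHom_ι (n : ℕ) :
    densityHom ht hq hl (UniversalEnvelopingAlgebra.ι k (wittEltS k n)) =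
      μ (q + n * l) * (μ q⁻¹ * t) ^ (n + 1) := by
  rw [densityHom, UniversalEnvelopingAlgebra.lift_ι_apply, positiveWittLift_wittEltS]

lemma densityHom_ι_zero (hq₀ : q ≠ 0) :
    densityHom ht hq hl (UniversalEnvelopingAlgebra.ι k (wittEltS k 0)) = t := by
  rw [densityHom_ι, ← mul_one (q⁻¹)]
  simp [← mul_assoc, ← map_mul, hq₀]

lemma densityHom_ι_one :
    densityHom ht hq hl (UniversalEnvelopingAlgebra.ι k (wittEltS k 1)) =
      μ ((q + l) / (q * (q - 1))) * t ^ 2 := by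
  calc _ = μ (q + l) * μ q⁻¹ * (t * μ q⁻¹) * t := by
        rw [densityHom_ι, Nat.cast_one, one_mul, one_add_one_eq_two, pow_two]
        simp only [mul_assoc]
    _ = μ (q + l) * μ q⁻¹ * (μ (q - 1)⁻¹ * t) * t := by rw [(ht _).eq, map_inv₀ τ, hq]
    _ = μ ((q + l) / (q * (q - 1))) * t ^ 2 := by
        rw [div_eq_mul_inv, mul_inv, map_mul, map_mul, pow_two]
        simp only [mul_assoc]

lemma densityHom_mem_skewComponent {n : ℕ} {u : UniversalEnvelopingAlgebra k (positiveWitt k)}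
    (hu : u ∈ Udeg k n) : densityHom ht hq hl u ∈ skewComponent μ t n := by
  have := gradedMonoid_skewComponent ht
  refine Udeg_le_comap (skewComponent μ t) (densityHom ht hq hl) (fun m ↦ ?_) n hu
  have hcoeff (g : F) : μ g ∈ skewComponent μ t 0 := by
    simpa using mul_pow_mem_skewComponent μ t g 0
  have hshift : μ q⁻¹ * t ∈ skewComponent μ t 1 := by
    simpa using mul_pow_mem_skewComponent μ t q⁻¹ 1
  rw [densityHom_ι]
  simpa using SetLike.mul_mem_graded (hcoeff (q + m * l)) (SetLike.pow_mem_graded (m + 1) hshift)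

lemma densityHom_mem_subalgebra {S : Subalgebra k A} (hμ : ∀ g, μ g ∈ S) (htS : t ∈ S)
    (u : UniversalEnvelopingAlgebra k (positiveWitt k)) : densityHom ht hq hl u ∈ S :=
  lift_mem_subalgebra (positiveWittLift_mem _ (N := S.toSubmodule) fun n ↦
    S.mul_mem (hμ _) (S.pow_mem (S.mul_mem (hμ _) htS) (n + 1))) u

include ht hq hl in
theorem exists_graded_algHom_of_semiconjBy (hq₀ : q ≠ 0) {S : Subalgebra k A}
    (hμ : ∀ g, μ g ∈ S) (htS : t ∈ S) :
    ∃ ρ : UniversalEnvelopingAlgebra k (positiveWitt k) →ₐ[k] A,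
      (∀ u, ρ u ∈ S) ∧
      ρ (UniversalEnvelopingAlgebra.ι k (wittEltS k 0)) = t ∧
      ρ (UniversalEnvelopingAlgebra.ι k (wittEltS k 1)) =
        μ ((q + l) / (q * (q - 1))) * t ^ 2 ∧
      ∀ n, ∀ u ∈ Udeg k n, ρ u ∈ skewComponent μ t n :=
  ⟨densityHom ht hq hl, densityHom_mem_subalgebra ht hq hl hμ htS, densityHom_ι_zero ht hq hl hq₀,
    densityHom_ι_one ht hq hl, fun _ _ ↦ densityHom_mem_skewComponent ht hq hl⟩

end DensityHom

section SkewPolynomial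

variable {k : Type*} [Field k]

lemma lsmul_eq_mulOp (g : coneField k) :
    Algebra.lsmul k k (ℕ →₀ coneField k) g = mulOp k g := by
  ext
  rfl

lemma lsmul_mem_skewPolyRing (g : coneField k) :
    Algebra.lsmul k k (ℕ →₀ coneField k) g ∈ skewPolyRing k :=
  Algebra.subset_adjoin (Or.inr ⟨g, (lsmul_eq_mulOp g).symm⟩)

lemma tOp_mem_skewPolyRing : tOp k ∈ skewPolyRing k :=
  Algebra.subset_adjoin (Or.inl rfl)

lemma semiconjBy_tOp_lsmul (g : coneField k) :
    SemiconjBy (tOp k) (Algebra.lsmul k k (ℕ →₀ coneField k) g)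
      (Algebra.lsmul k k (ℕ →₀ coneField k) (tauFrac k g)) := by
  simp only [lsmul_eq_mulOp]
  refine Finsupp.lhom_ext fun i a ↦ ?_
  simp only [tOp, mulOp, Module.End.mul_apply, LinearMap.comp_apply,
    Finsupp.mapRange.linearMap_apply, Finsupp.mapRange_single, Finsupp.lmapDomain_apply,
    Finsupp.mapDomain_single, LinearMap.mulLeft_apply, AlgEquiv.toLinearMap_apply, map_mul]

end SkewPolynomial

section Cone

open MvPolynomial

section Coordinates

variable {k : Type*} [Field k]

lemma aeval_varK (p : conePoly k) :
    aeval (varK k) p =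
      algebraMap (coneRing k) (coneField k) (Ideal.Quotient.mk (coneIdeal k) p) := by
  let φ : conePoly k →ₐ[k] coneField k :=
    (Algebra.algHom k (coneRing k) (coneField k)).comp (Ideal.Quotient.mkₐ k (coneIdeal k))
  exact DFunLike.congr_fun (aeval_unique φ).symm p

lemma varK_one_mul_varK_three : varK k 1 * varK k 3 = varK k 2 ^ 2 := by
  have h : aeval (varK k) (coneRel k) = 0 := by
    have hmem : coneRel k ∈ coneIdeal k := Ideal.mem_span_singleton_self _
    rw [aeval_varK, Ideal.Quotient.eq_zero_iff_mem.mpr hmem, map_zero]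
  simpa [coneRel, sub_eq_zero] using h

lemma aeval_varK_ne_zero {p : conePoly k} {v : Fin 4 → k} (hv : v 1 * v 3 = v 2 ^ 2)
    (hp : eval v p ≠ 0) : aeval (varK k) p ≠ 0 := by
  rw [aeval_varK, Ne, IsFractionRing.to_map_eq_zero_iff, Ideal.Quotient.eq_zero_iff_mem]
  have hle : coneIdeal k ≤ RingHom.ker (eval v) :=
    (Ideal.span_singleton_le_iff_mem _).mpr (by simp [RingHom.mem_ker, coneRel, hv])
  exact fun h ↦ hp (hle h)

lemma tauFrac_varK (i : Fin 4) : tauFrac k (varK k i) = aeval (varK k) (tauSub k i) := by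
  have htau : tauPoly k (X i) = tauSub k i := aeval_X _ _
  rw [aeval_varK, ← htau]
  exact IsFractionRing.algEquivOfAlgEquiv_algebraMap _ _

lemma tauFrac_varK_zero : tauFrac k (varK k 0) = varK k 0 - 2 * varK k 1 + 2 * varK k 3 := by
  simp [tauFrac_varK, tauSub]

lemma tauFrac_varK_one : tauFrac k (varK k 1) = varK k 3 := by
  simp [tauFrac_varK, tauSub]

lemma tauFrac_varK_two : tauFrac k (varK k 2) = -varK k 2 - 2 * varK k 3 := by
  simp [tauFrac_varK, tauSub]

lemma tauFrac_varK_three : tauFrac k (varK k 3) = varK k 1 + 4 * varK k 2 + 4 * varK k 3 := by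
  simp [tauFrac_varK, tauSub]

variable (k) in
/-- The `τ*`-invariant linear form `x + 2y + z`. -/
def invariantForm : coneField k :=
  varK k 1 + 2 * varK k 2 + varK k 3

lemma tauFrac_invariantForm : tauFrac k (invariantForm k) = invariantForm k := by
  simp only [invariantForm, map_add, map_mul, map_ofNat, tauFrac_varK_one, tauFrac_varK_two,
    tauFrac_varK_three]
  ring

lemma invariantForm_ne_zero : invariantForm k ≠ 0 := by
  have h := aeval_varK_ne_zero (p := X 1 + 2 * X 2 + X 3)
    (v := (![0, 0, 0, 1] : Fin 4 → k)) (by simp) (by simp)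
  simpa only [invariantForm, map_add, map_mul, map_ofNat, aeval_X] using h

lemma two_mul_varK_one_add_ne_zero :
    2 * varK k 1 + 3 * varK k 2 + varK k 3 ≠ 0 := by
  have h := aeval_varK_ne_zero (p := 2 * X 1 + 3 * X 2 + X 3)
    (v := (![0, 0, 0, 1] : Fin 4 → k)) (by simp) (by simp)
  simpa only [map_add, map_mul, map_ofNat, aeval_X] using h

end Coordinates

variable {k : Type*} [Field k] [IsDomain (coneRing k)]

variable (k) in
/-- The rational function `q = (2x + 3y + z) / (x + 2y + z)`, which `τ*` translates by `-1`. -/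
def coneTranslate : coneField k :=
  (2 * varK k 1 + 3 * varK k 2 + varK k 3) / invariantForm k

lemma coneTranslate_ne_zero : coneTranslate k ≠ 0 :=
  div_ne_zero two_mul_varK_one_add_ne_zero invariantForm_ne_zero

lemma coneTranslate_sub_one :
    coneTranslate k - 1 = (varK k 1 + varK k 2) / invariantForm k := by
  rw [coneTranslate, div_sub_one invariantForm_ne_zero, invariantForm]
  ring

lemma tauFrac_coneTranslate : tauFrac k (coneTranslate k) = coneTranslate k - 1 := by
  rw [coneTranslate_sub_one, coneTranslate, map_div₀, tauFrac_invariantForm]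
  simp only [map_add, map_mul, map_ofNat, tauFrac_varK_one, tauFrac_varK_two, tauFrac_varK_three]
  ring

variable (k) in
/-- The `τ*`-invariant `l = (w / (x + 2y + z) - 2q² + 4q) / 6`, where `q` is `coneTranslate`. It is
the solution of `f = (q + l) / (q (q - 1))`. -/
def coneInvariant : coneField k :=
  (varK k 0 / invariantForm k - 2 * coneTranslate k ^ 2 + 4 * coneTranslate k) / 6

lemma tauFrac_coneInvariant : tauFrac k (coneInvariant k) = coneInvariant k := by
  have hs := invariantForm_ne_zero (k := k)
  have hw : tauFrac k (varK k 0) / invariantForm k =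
      varK k 0 / invariantForm k + 6 - 4 * coneTranslate k := by
    rw [tauFrac_varK_zero, coneTranslate]
    field_simp
    rw [invariantForm]
    ring
  simp only [coneInvariant, map_add, map_sub, map_mul, map_pow, map_div₀, map_ofNat,
    tauFrac_invariantForm, hw, tauFrac_coneTranslate]
  ring

lemma fRat_denominator_eq : 12 * varK k 1 + 6 * varK k 2 =
    6 * invariantForm k * (coneTranslate k * (coneTranslate k - 1)) := by
  have hs := invariantForm_ne_zero (k := k)
  rw [coneTranslate_sub_one, coneTranslate]
  field_simp
  rw [invariantForm]
  linear_combination 6 * varK_one_mul_varK_three (k := k)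

lemma fRat_numerator_eq (h6 : (6 : coneField k) ≠ 0) :
    varK k 0 + 12 * varK k 1 + 22 * varK k 2 + 8 * varK k 3 =
      6 * invariantForm k * (coneTranslate k + coneInvariant k) := by
  have hs := invariantForm_ne_zero (k := k)
  rw [coneInvariant, coneTranslate]
  field_simp
  rw [invariantForm]
  linear_combination (-2) * varK_one_mul_varK_three (k := k)

lemma fRat_eq (h6 : (6 : k) ≠ 0) :
    fRat k = (coneTranslate k + coneInvariant k) / (coneTranslate k * (coneTranslate k - 1)) := by
  have h6' : (6 : coneField k) ≠ 0 := by
    simpa only [map_ofNat] using (map_ne_zero (algebraMap k (coneField k))).mpr h6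
  rw [fRat, fRat_numerator_eq h6', fRat_denominator_eq,
    mul_div_mul_left _ _ (mul_ne_zero h6' invariantForm_ne_zero)]

end Cone

theorem exists_graded_hom_enveloping_to_skewPoly_general (k : Type*) [Field k]
    [IsDomain (coneRing k)] (h6 : (6 : k) ≠ 0) :
    ∃ ρ : UniversalEnvelopingAlgebra k (positiveWitt k) →ₐ[k]
        Module.End k (ℕ →₀ coneField k),
      (∀ u, ρ u ∈ skewPolyRing k) ∧
      ρ (UniversalEnvelopingAlgebra.ι k (wittEltS k 0)) = tOp k ∧
      ρ (UniversalEnvelopingAlgebra.ι k (wittEltS k 1)) =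
        mulOp k (fRat k) * tOp k ^ 2 ∧
      ∀ (n : ℕ) (u : UniversalEnvelopingAlgebra k (positiveWitt k)), u ∈ Udeg k n →
        ∃ g : coneField k, ρ u = mulOp k g * tOp k ^ n := by
  obtain ⟨ρ, hmem, hρ₁, hρ₂, hdeg⟩ := exists_graded_algHom_of_semiconjBy
    (A := Module.End k (ℕ →₀ coneField k)) (S := skewPolyRing k) (t := tOp k)
    (μ := Algebra.lsmul k k (ℕ →₀ coneField k)) (τ := (tauFrac k : coneField k →+* coneField k))
    semiconjBy_tOp_lsmul tauFrac_coneTranslate tauFrac_coneInvariant coneTranslate_ne_zero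
    lsmul_mem_skewPolyRing tOp_mem_skewPolyRing
  refine ⟨ρ, hmem, hρ₁, ?_, fun n u hu ↦ ?_⟩
  · rw [hρ₂, fRat_eq h6, ← lsmul_eq_mulOp]
  · obtain ⟨g, hg⟩ := hdeg n u hu
    exact ⟨g, hg.symm.trans (congrArg (· * tOp k ^ n) (lsmul_eq_mulOp g))⟩

theorem exists_graded_hom_enveloping_to_skewPoly (k : Type*) [Field k] [CharZero k]
    [IsDomain (coneRing k)] :
    ∃ ρ : UniversalEnvelopingAlgebra k (positiveWitt k) →ₐ[k]
        Module.End k (ℕ →₀ coneField k),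
      (∀ u, ρ u ∈ skewPolyRing k) ∧
      ρ (UniversalEnvelopingAlgebra.ι k (wittEltS k 0)) = tOp k ∧
      ρ (UniversalEnvelopingAlgebra.ι k (wittEltS k 1)) =
        mulOp k (fRat k) * tOp k ^ 2 ∧
      ∀ (n : ℕ) (u : UniversalEnvelopingAlgebra k (positiveWitt k)), u ∈ Udeg k n →
        ∃ g : coneField k, ρ u = mulOp k g * tOp k ^ n :=
  exists_graded_hom_enveloping_to_skewPoly_general k (by norm_num)

end
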